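/- Let θ be a cylindric diagram in C_ω and let α, β ∈ R(w_θ) with α ⊴ β. Then there exists a finite sequence α = γ₁, γ₂, …, γ_k = β of elements of R(w_θ) such that γ_{i+1} − γ_i ∈ Π_θ for i = 1, …, k−1. In other words, the partial order ⊴ on R(w_θ) coincides with the transitive-reflexive closure of the relation α ≺ β whenever β − α ∈ Π_θ. -/

import Mathlib

/-!
The relation `⊴` is the reflexive-transitive closure of its elementary steps because it is
nothing but the order of the cells of `θ`, read through a suitable pair of lifts to `ℤ²`.

Let `r a` be the last column of row `a` of the periodic diagram `π⁻¹(θ)`, and `c b` the last row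
of its column `b` (`IsBoundary`). Call the integers `r a - a` row ends and `b - 1 - c b` column
feet; the two kinds of integers are disjoint and each is stable under translation by `κ`. The hook
at `(a, b)` is the interval root `α_{t+1} + ⋯ + α_s` with `t = b - 1 - c b` and `s = r a - a`
(`IsBoundary.hk_pr`). In the same way each element of `Π_θ` is an interval root between two row
ends or between two column feet, and the intervals between neighbouring row ends, or neighbouring
column feet, all lie in `Π_θ` (`row_gap`, `col_gap`). Hence decreasing either coordinate of a cell
by one changes its hook by an element of `Π_θ`, and any two cells `(p, q)`, `(a, b)` with `p ≤ a`
and `q ≤ b` are joined by a chain (`chain`).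

Conversely let `hk(a, b) ⊴ hk(p, q)`. Translating `(p, q)` by a multiple of `ω` gives
`a - m < p ≤ a`, and the claim is that then `q ≤ b` (`col_le_of_trile`). Take
`F(n) = ⌊(n - s) / κ⌋` on row ends and `F(n) = ⌊(n - t') / κ⌋` elsewhere, where `s = r a - a` is
the row end of the first hook and `t' = q - 1 - c q` the column foot of the second. As
`F(n + κ) = F(n) + 1`, there is an additive functional with `α_n ↦ F(n) - F(n - 1)`; it is
nonnegative on `Π_θ`, since `F` is monotone on row ends and on column feet. The row ends of the
two hooks lie in `[s, s + κ)`, where `F` vanishes, so if `b < q` the functional takes the value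
`⌊(t - t') / κ⌋ < 0` on `hk(p, q) - hk(a, b)`, with `t = b - 1 - c b < t'`: a contradiction.
-/

namespace CylPaper

/-! ## The cylinder and its order -/

abbrev Z2 : Type := ℤ × ℤ

/-- The partial order on ℤ²: (a,b) ≤ (c,d) iff a ≥ c and b ≥ d. -/
def le2 (x y : Z2) : Prop := y.1 ≤ x.1 ∧ y.2 ≤ x.2

/-- The period ω = (m, -ℓ). -/
def om (m l : ℕ) : Z2 := ((m : ℤ), -(l : ℤ))

/-- The cylinder C_ω = ℤ²/ℤω. -/
abbrev Cyl (m l : ℕ) : Type := Z2 ⧸ AddSubgroup.zmultiples (om m l)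

/-- The natural projection π : ℤ² → C_ω. -/
def pr (m l : ℕ) : Z2 →+ Cyl m l := QuotientAddGroup.mk' _

/-- The induced order relation on the cylinder: x ≤ y iff there are lifts with x̃ ≤ ỹ. -/
def cle (m l : ℕ) (x y : Cyl m l) : Prop :=
  ∃ a b : Z2, pr m l a = x ∧ pr m l b = y ∧ le2 a b

/-- A cylindric diagram: a non-trivial order filter of C_ω. -/
def IsCylindric (m l : ℕ) (θ : Set (Cyl m l)) : Prop :=
  θ.Nonempty ∧ θ ≠ Set.univ ∧ ∀ x ∈ θ, ∀ y, cle m l x y → y ∈ θ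

/-- A periodic diagram of period ω: a non-trivial order filter of ℤ² with Θ + ω = Θ. -/
def IsPeriodic (m l : ℕ) (Θ : Set Z2) : Prop :=
  Θ.Nonempty ∧ Θ ≠ Set.univ ∧ (∀ x ∈ Θ, ∀ y, le2 x y → y ∈ Θ) ∧
    (fun p => p + om m l) '' Θ = Θ

/-- A proper order ideal ξ of the sub-poset θ of C_ω. -/
def IsProperIdealOf (m l : ℕ) (θ ξ : Set (Cyl m l)) : Prop :=
  ξ ⊆ θ ∧ ξ ≠ θ ∧ ∀ x ∈ ξ, ∀ y ∈ θ, cle m l y x → y ∈ ξ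

/-- A proper order ideal of the whole cylinder C_ω. -/
def IsProperIdealC (m l : ℕ) (J : Set (Cyl m l)) : Prop :=
  J ≠ Set.univ ∧ ∀ x ∈ J, ∀ y, cle m l y x → y ∈ J

/-- A proper order filter of the whole cylinder C_ω. -/
def IsProperFilterC (m l : ℕ) (J : Set (Cyl m l)) : Prop :=
  J ≠ Set.univ ∧ ∀ x ∈ J, ∀ y, cle m l x y → y ∈ J

/-! ## The content map -/

/-- The content on ℤ²: (a,b) ↦ b - a mod κ (κ = m + ℓ). -/
def conHom (m l : ℕ) : Z2 →+ ZMod (m + l) where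
  toFun p := ((p.2 - p.1 : ℤ) : ZMod (m + l))
  map_zero' := by simp
  map_add' a b := by
    simp only [Prod.fst_add, Prod.snd_add]
    push_cast
    ring

lemma conHom_om (m l : ℕ) : conHom m l (om m l) = 0 := by
  have h : ((m + l : ℕ) : ZMod (m + l)) = 0 := ZMod.natCast_self _
  show ((((om m l).2 - (om m l).1 : ℤ)) : ZMod (m + l)) = 0
  simp only [om]
  push_cast at h ⊢
  linear_combination -h

/-- The content map con : C_ω → ℤ/κℤ. -/
def con (m l : ℕ) : Cyl m l →+ ZMod (m + l) :=
  QuotientAddGroup.lift _ (conHom m l) (by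
    intro x hx
    obtain ⟨k, rfl⟩ := AddSubgroup.mem_zmultiples_iff.mp hx
    simp only [AddMonoidHom.mem_ker, map_zsmul, conHom_om, smul_zero])

/-! ## The affine root system of type A_{κ-1}^{(1)} -/

/-- h*, with coordinates in the basis {α_i (i ∈ ℤ/κℤ), Λ₀}:
`(c, t)` stands for `Σ_i c_i α_i + t Λ₀`. -/
abbrev Hw (κ : ℕ) : Type := (ZMod κ → ℚ) × ℚ

/-- The affine Cartan matrix of type A_{κ-1}^{(1)} (valid for κ ≥ 2). -/
def cartan (κ : ℕ) (i j : ZMod κ) : ℚ :=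
  (if i = j then 2 else 0) + (if i - j = 1 then -1 else 0) + (if i - j = -1 then -1 else 0)

/-- The simple root α_i. -/
def alphaR (κ : ℕ) (i : ZMod κ) : Hw κ := (Pi.single i 1, 0)

/-- The null root δ = Σ_i α_i. -/
def deltaR (κ : ℕ) : Hw κ := (fun _ => 1, 0)

/-- The pairing ⟨ζ, α_i^∨⟩. -/
noncomputable def pairSimple (κ : ℕ) (ζ : Hw κ) (i : ZMod κ) : ℚ :=
  (∑ᶠ j, ζ.1 j * cartan κ i j) + ζ.2 * (if i = 0 then 1 else 0)

/-- The pairing ⟨ζ, β^∨⟩ where β = Σ_i k_i α_i lies in the root lattice,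
so β^∨ = Σ_i k_i α_i^∨. -/
noncomputable def pairCo (κ : ℕ) (ζ β : Hw κ) : ℚ := ∑ᶠ i, β.1 i * pairSimple κ ζ i

/-- The simple reflection s_i : ζ ↦ ζ - ⟨ζ, α_i^∨⟩ α_i, as a map on h*. -/
noncomputable def sFun (κ : ℕ) (i : ZMod κ) (ζ : Hw κ) : Hw κ :=
  ζ - pairSimple κ ζ i • alphaR κ i

/-- The element s_{i₁} s_{i₂} ⋯ s_{i_r} of the affine Weyl group
given by a word [i₁, i₂, …, i_r]. -/
noncomputable def wordProd (κ : ℕ) (L : List (ZMod κ)) : Hw κ → Hw κ :=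
  (L.map (sFun κ)).foldr (· ∘ ·) id

/-- Membership in the affine Weyl group W (generated by the s_i). -/
def Wmem (κ : ℕ) (w : Hw κ → Hw κ) : Prop := ∃ L : List (ZMod κ), wordProd κ L = w

/-- The Coxeter length: the least r such that w is a product of r simple reflections. -/
noncomputable def len (κ : ℕ) (w : Hw κ → Hw κ) : ℕ :=
  sInf {r : ℕ | ∃ L : List (ZMod κ), L.length = r ∧ wordProd κ L = w}

/-- Q₊ = Σ_i ℤ≥0 α_i. -/
def QPos (κ : ℕ) : Set (Hw κ) := {x | x.2 = 0 ∧ ∀ i, ∃ n : ℕ, x.1 i = (n : ℚ)}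

/-- The set R = WΠ of real roots. -/
def Rset (κ : ℕ) : Set (Hw κ) :=
  {β | ∃ (L : List (ZMod κ)) (i : ZMod κ), β = wordProd κ L (alphaR κ i)}

/-- Positive real roots R₊ = R ∩ Q₊. -/
def Rpos (κ : ℕ) : Set (Hw κ) := Rset κ ∩ QPos κ

/-- Negative real roots R₋ = -R₊. -/
def Rneg (κ : ℕ) : Set (Hw κ) := {β | -β ∈ Rpos κ}

/-- The inversion set R(w) = R₊ ∩ w R₋. -/
def invSet (κ : ℕ) (w : Hw κ → Hw κ) : Set (Hw κ) := Rpos κ ∩ (w '' Rneg κ)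

/-- The weak right Bruhat order on W. -/
def wble (κ : ℕ) (v w : Hw κ → Hw κ) : Prop :=
  Relation.ReflTransGen
    (fun u u' => ∃ i : ZMod κ, u' = u ∘ sFun κ i ∧ len κ u' = len κ u + 1) v w

/-- The weak Bruhat interval [e, w]. -/
def bint (κ : ℕ) (w : Hw κ → Hw κ) : Set (Hw κ → Hw κ) :=
  {x | wble κ id x ∧ wble κ x w}

/-- A single commutation move on words: swap adjacent letters i, j with i - j ≠ 0, ±1. -/
def CommMove (κ : ℕ) (L1 L2 : List (ZMod κ)) : Prop :=
  ∃ (u v : List (ZMod κ)) (i j : ZMod κ),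
    i - j ≠ 0 ∧ i - j ≠ 1 ∧ i - j ≠ -1 ∧
    L1 = u ++ i :: j :: v ∧ L2 = u ++ j :: i :: v

/-- A word is reduced if its length equals the Coxeter length of its product. -/
def IsReducedWord (κ : ℕ) (L : List (ZMod κ)) : Prop :=
  len κ (wordProd κ L) = L.length

/-- Fully commutative: any reduced word for w can be obtained from any other
using only commutation moves. -/
def FullyComm (κ : ℕ) (w : Hw κ → Hw κ) : Prop :=
  ∀ L1 L2 : List (ZMod κ),
    IsReducedWord κ L1 → wordProd κ L1 = w →
    IsReducedWord κ L2 → wordProd κ L2 = w →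
    Relation.ReflTransGen (CommMove κ) L1 L2

/-! ## Hooks, bottom set and weights attached to a cylindric diagram -/

/-- α(x) = α_{con(x)}. -/
def alC (m l : ℕ) (x : Cyl m l) : Hw (m + l) := alphaR (m + l) (con m l x)

/-- arm(x) = {x + π(0,k) : k ≥ 1} ∩ θ. -/
def armSet (m l : ℕ) (θ : Set (Cyl m l)) (x : Cyl m l) : Set (Cyl m l) :=
  {y | y ∈ θ ∧ ∃ k : ℕ, 1 ≤ k ∧ y = x + pr m l (0, (k : ℤ))}

/-- leg(x) = {x + π(k,0) : k ≥ 1} ∩ θ. -/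
def legSet (m l : ℕ) (θ : Set (Cyl m l)) (x : Cyl m l) : Set (Cyl m l) :=
  {y | y ∈ θ ∧ ∃ k : ℕ, 1 ≤ k ∧ y = x + pr m l ((k : ℤ), 0)}

/-- The colored hook length hk(x) = α(x) + Σ_{y∈arm(x)} α(y) + Σ_{y∈leg(x)} α(y). -/
noncomputable def hk (m l : ℕ) (θ : Set (Cyl m l)) (x : Cyl m l) : Hw (m + l) :=
  alC m l x + (∑ᶠ y ∈ armSet m l θ x, alC m l y) + (∑ᶠ y ∈ legSet m l θ x, alC m l y)

/-- x is the minimum cell b_i of content i in θ. -/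
def IsBottomCell (m l : ℕ) (θ : Set (Cyl m l)) (i : ZMod (m + l)) (x : Cyl m l) : Prop :=
  x ∈ θ ∧ con m l x = i ∧ ∀ y ∈ θ, con m l y = i → cle m l x y

/-- The bottom set Γ = {b_i : i ∈ ℤ/κℤ}. -/
def btm (m l : ℕ) (θ : Set (Cyl m l)) : Set (Cyl m l) :=
  {x | ∃ i, IsBottomCell m l θ i x}

/-- The maximal elements Γ_max of the bottom set. -/
def btmMax (m l : ℕ) (θ : Set (Cyl m l)) : Set (Cyl m l) :=
  {x | x ∈ btm m l θ ∧ ∀ y ∈ btm m l θ, cle m l x y → y = x}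

/-- The minimal elements Γ_min of the bottom set. -/
def btmMin (m l : ℕ) (θ : Set (Cyl m l)) : Set (Cyl m l) :=
  {x | x ∈ btm m l θ ∧ ∀ y ∈ btm m l θ, cle m l y x → y = x}

open Classical in
/-- The coefficient a_i of Λ_i in the predominant weight P_θ:
1 if b_i ∈ Γ_max, -1 if b_i ∈ Γ_min, 0 otherwise. -/
noncomputable def aC (m l : ℕ) (θ : Set (Cyl m l)) (i : ZMod (m + l)) : ℚ :=
  if ∃ x, IsBottomCell m l θ i x ∧ x ∈ btmMax m l θ then 1
  else if ∃ x, IsBottomCell m l θ i x ∧ x ∈ btmMin m l θ then -1 else 0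

/-- The pairing ⟨P_θ, β^∨⟩ = Σ_i a_i k_i for β = Σ_i k_i α_i,
where P_θ = Σ_i a_i Λ_i (since ⟨Λ_i, α_j^∨⟩ = δ_{ij} and ⟨Λ_i, d⟩ = 0). -/
noncomputable def pairP (m l : ℕ) (θ : Set (Cyl m l)) (β : Hw (m + l)) : ℚ :=
  ∑ᶠ i, aC m l θ i * β.1 i

/-- D(P_θ) = {α ∈ R₊ : ⟨P_θ, α^∨⟩ = -1}. -/
def DSet (m l : ℕ) (θ : Set (Cyl m l)) : Set (Hw (m + l)) :=
  {β | β ∈ Rpos (m + l) ∧ pairP m l θ β = -1}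

/-- The "inversion set" R(w_θ) = {hk(x) : x ∈ θ}. -/
def RwTheta (m l : ℕ) (θ : Set (Cyl m l)) : Set (Hw (m + l)) := hk m l θ '' θ

/-- The set Π_θ = Π_θ^0 ∪ Π_θ^arm ∪ Π_θ^leg. -/
def PiTheta (m l : ℕ) (θ : Set (Cyl m l)) : Set (Hw (m + l)) :=
  {v | ∃ x, x ∈ btm m l θ ∧ x ∉ btmMax m l θ ∧ x ∉ btmMin m l θ ∧ v = alC m l x} ∪
  {v | ∃ x, x ∈ btmMax m l θ ∧ v = alC m l x + ∑ᶠ y ∈ armSet m l θ x, alC m l y} ∪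
  {v | ∃ x, x ∈ btmMax m l θ ∧ v = alC m l x + ∑ᶠ y ∈ legSet m l θ x, alC m l y}

/-- The modified order ⊴ on R(w_θ): α ⊴ β iff β - α ∈ Σ_{γ∈Π_θ} ℤ≥0 γ. -/
def trile (m l : ℕ) (θ : Set (Cyl m l)) (α β : Hw (m + l)) : Prop :=
  β - α ∈ AddSubmonoid.closure (PiTheta m l θ)

/-! ## Standard tableaux (encoded by the inverse enumeration e = T⁻¹ : ℤ≥1 → θ) -/

/-- A standard tableau on θ, given by the enumeration e = T⁻¹ : {1,2,…} → θ.
This is precisely the data of an order-preserving bijection T : θ → ℤ≥1. -/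
def IsTableau (m l : ℕ) (θ : Set (Cyl m l)) (e : ℕ → Cyl m l) : Prop :=
  Set.InjOn e {a : ℕ | 1 ≤ a} ∧ e '' {a : ℕ | 1 ≤ a} = θ ∧
  ∀ a b : ℕ, 1 ≤ a → 1 ≤ b → cle m l (e a) (e b) → e a ≠ e b → a < b

/-- A standard tableau on a finite (skew) diagram ξ with |ξ| = n, encoded by
the enumeration e = S⁻¹ : {1,…,n} → ξ. -/
def IsTableauOn (m l : ℕ) (ξ : Set (Cyl m l)) (n : ℕ) (e : ℕ → Cyl m l) : Prop :=
  Set.InjOn e (Set.Icc 1 n) ∧ e '' Set.Icc 1 n = ξ ∧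
  ∀ a b : ℕ, a ∈ Set.Icc 1 n → b ∈ Set.Icc 1 n → cle m l (e a) (e b) → e a ≠ e b → a < b

/-- The word (con(e 1), con(e 2), …, con(e n)). -/
def tabWord (m l : ℕ) (e : ℕ → Cyl m l) (n : ℕ) : List (ZMod (m + l)) :=
  (List.range n).map (fun k => con m l (e (k + 1)))

/-- The semi-infinite Bruhat interval [e, w_{θ,T}) = ⋃_{n≥1} [e, w_{θ,T}[n]]. -/
def semiInt (m l : ℕ) (e : ℕ → Cyl m l) : Set (Hw (m + l) → Hw (m + l)) :=
  ⋃ n ∈ {n : ℕ | 1 ≤ n}, bint (m + l) (wordProd (m + l) (tabWord m l e n))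

/-- w is P_θ-pluscule: ⟨P_θ, α^∨⟩ = -1 for every α ∈ R(w). -/
def Pluscule (m l : ℕ) (θ : Set (Cyl m l)) (w : Hw (m + l) → Hw (m + l)) : Prop :=
  ∀ β ∈ invSet (m + l) w, pairP m l θ β = -1

/-- The generating relation of the heap order ⪯_T on ℤ≥1. -/
def heapRel (m l : ℕ) (e : ℕ → Cyl m l) (a b : ℕ) : Prop :=
  1 ≤ a ∧ a ≤ b ∧
    (con m l (e a) = con m l (e b) ∨
      sFun (m + l) (con m l (e a)) ∘ sFun (m + l) (con m l (e b)) ≠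
        sFun (m + l) (con m l (e b)) ∘ sFun (m + l) (con m l (e a)))

/-- The generating relation of the heap order ≤^hp on R(w_θ):
α ≤ β whenever β - α ∈ Q₊ (the ordinary order) and ⟨α, β^∨⟩ ≠ 0. -/
def hpRel (m l : ℕ) (θ : Set (Cyl m l)) (α β : Hw (m + l)) : Prop :=
  α ∈ RwTheta m l θ ∧ β ∈ RwTheta m l θ ∧ β - α ∈ QPos (m + l) ∧
    pairCo (m + l) α β ≠ 0

/-- v is the Weyl group element w_ξ of a proper order ideal ξ of θ. -/
def IsIdealWord (m l : ℕ) (θ ξ : Set (Cyl m l)) (v : Hw (m + l) → Hw (m + l)) : Prop :=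
  IsProperIdealOf m l θ ξ ∧
    ∃ n e, IsTableauOn m l ξ n e ∧ v = wordProd (m + l) (tabWord m l e n)

/-- A proper order ideal of the poset (R(w_θ), ⊴). -/
def IsProperIdealOfRw (m l : ℕ) (θ : Set (Cyl m l)) (J : Set (Hw (m + l))) : Prop :=
  J ⊆ RwTheta m l θ ∧ J ≠ RwTheta m l θ ∧
    ∀ β ∈ J, ∀ α ∈ RwTheta m l θ, trile m l θ α β → α ∈ J

/-! ### Arithmetic on the cylinder -/

lemma pr_eq_iff (m l : ℕ) (p q : Z2) :
    pr m l p = pr m l q ↔ ∃ k : ℤ, q.1 = p.1 + k * m ∧ q.2 = p.2 - k * l := by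
  have h : pr m l p = pr m l q ↔ -p + q ∈ AddSubgroup.zmultiples (om m l) :=
    QuotientAddGroup.eq
  rw [h, AddSubgroup.mem_zmultiples_iff]
  constructor
  · rintro ⟨k, hk⟩
    have h1 := congrArg Prod.fst hk
    have h2 := congrArg Prod.snd hk
    simp [om] at h1 h2
    exact ⟨k, by linarith, by linarith⟩
  · rintro ⟨k, h1, h2⟩
    refine ⟨k, ?_⟩
    ext
    · simp [om, h1]
    · simp [om, h2]; ring

lemma pr_shift (m l : ℕ) (a b k : ℤ) : pr m l (a + k * m, b - k * l) = pr m l (a, b) :=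
  ((pr_eq_iff m l _ _).2 ⟨k, rfl, rfl⟩).symm

lemma pr_surj (m l : ℕ) (x : Cyl m l) : ∃ a b : ℤ, pr m l (a, b) = x := by
  obtain ⟨⟨a, b⟩, h⟩ := QuotientAddGroup.mk'_surjective (AddSubgroup.zmultiples (om m l)) x
  exact ⟨a, b, h⟩

lemma con_pr (m l : ℕ) (a b : ℤ) : con m l (pr m l (a, b)) = ((b - a : ℤ) : ZMod (m + l)) := rfl

/-- Comparison with a fixed lift: the other lift in `cle` can be moved to match it. -/
lemma cle_pr_left (m l : ℕ) (a b : ℤ) (y : Cyl m l) :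
    cle m l (pr m l (a, b)) y ↔ ∃ p q : ℤ, p ≤ a ∧ q ≤ b ∧ pr m l (p, q) = y := by
  constructor
  · rintro ⟨⟨a1, b1⟩, ⟨p, q⟩, h1, rfl, h2, h3⟩
    obtain ⟨k, e1, e2⟩ := (pr_eq_iff m l _ _).1 h1
    refine ⟨p + k * m, q - k * l, ?_, ?_, pr_shift ..⟩
    · simp only at *; linarith
    · simp only at *; linarith
  · rintro ⟨p, q, h1, h2, rfl⟩
    exact ⟨_, _, rfl, rfl, h1, h2⟩

lemma cle_pr_right (m l : ℕ) (a b : ℤ) (y : Cyl m l) :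
    cle m l y (pr m l (a, b)) ↔ ∃ p q : ℤ, a ≤ p ∧ b ≤ q ∧ pr m l (p, q) = y := by
  constructor
  · rintro ⟨⟨p, q⟩, ⟨a1, b1⟩, rfl, h1, h2, h3⟩
    obtain ⟨k, e1, e2⟩ := (pr_eq_iff m l _ _).1 h1
    refine ⟨p + k * m, q - k * l, ?_, ?_, pr_shift ..⟩
    · simp only at *; linarith
    · simp only at *; linarith
  · rintro ⟨p, q, h1, h2, rfl⟩
    exact ⟨_, _, rfl, rfl, h1, h2⟩

/-- Two comparable points of `ℤ²` with the same image in the cylinder coincide, since `ω` has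
coordinates of opposite strict signs. -/
lemma eq_of_pr_eq {m l : ℕ} (hm : 1 ≤ m) (hl : 1 ≤ l) {a b p q : ℤ}
    (h : pr m l (a, b) = pr m l (p, q)) (hp : p ≤ a) (hq : q ≤ b) : p = a ∧ q = b := by
  obtain ⟨k, e1, e2⟩ := (pr_eq_iff m l _ _).1 h
  simp only at e1 e2
  have hm' : (1 : ℤ) ≤ m := by exact_mod_cast hm
  have hl' : (1 : ℤ) ≤ l := by exact_mod_cast hl
  have h1 : k ≤ 0 := by nlinarith
  have h2 : 0 ≤ k := by nlinarith
  have : k = 0 := le_antisymm h1 h2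
  subst this
  constructor <;> linarith

/-! ### Row and column ends of the periodic diagram -/

/-- The boundary of the periodic diagram `π⁻¹(θ) ⊆ ℤ²`: row `a` is `{b | b ≤ r a}` and
column `b` is `{a | a ≤ c b}`. -/
structure IsBoundary (m l : ℕ) (θ : Set (Cyl m l)) (r c : ℤ → ℤ) : Prop where
  row : ∀ a b : ℤ, pr m l (a, b) ∈ θ ↔ b ≤ r a
  col : ∀ a b : ℤ, pr m l (a, b) ∈ θ ↔ a ≤ c b

lemma exists_end (P : ℤ → Prop) (hd : ∀ x y, y ≤ x → P x → P y) (h1 : ∃ x, P x)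
    (h2 : ∃ x, ¬ P x) : ∃ r, ∀ x, P x ↔ x ≤ r := by
  obtain ⟨z, hz⟩ := h2
  obtain ⟨r, hr, hmax⟩ := Int.exists_greatest_of_bdd (P := P)
    ⟨z, fun x hx => by
      by_contra hlt
      exact hz (hd x z (by omega) hx)⟩ h1
  exact ⟨r, fun x => ⟨hmax x, fun h => hd r x h hr⟩⟩

lemma exists_boundary {m l : ℕ} (hm : 1 ≤ m) (hl : 1 ≤ l) {θ : Set (Cyl m l)}
    (hθ : IsCylindric m l θ) : ∃ r c, IsBoundary m l θ r c := by
  obtain ⟨⟨x, hx⟩, hne, hf⟩ := hθ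
  obtain ⟨y, hy⟩ := (Set.ne_univ_iff_exists_notMem _).1 hne
  obtain ⟨a0, b0, rfl⟩ := pr_surj m l x
  obtain ⟨a1, b1, rfl⟩ := pr_surj m l y
  have hd : ∀ a b p q : ℤ, p ≤ a → q ≤ b → pr m l (a, b) ∈ θ → pr m l (p, q) ∈ θ :=
    fun a b p q h1 h2 h => hf _ h _ ⟨_, _, rfl, rfl, h1, h2⟩
  have hm' : (1 : ℤ) ≤ m := by exact_mod_cast hm
  have hl' : (1 : ℤ) ≤ l := by exact_mod_cast hl
  have big : ∀ (n u v : ℤ), 1 ≤ n → v ≤ u + (|u| + |v|) * n := by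
    intro n u v hn
    nlinarith [abs_nonneg u, abs_nonneg v, neg_abs_le u, le_abs_self v]
  have small : ∀ (n u v : ℤ), 1 ≤ n → u - (|u| + |v|) * n ≤ v := by
    intro n u v hn
    nlinarith [abs_nonneg u, abs_nonneg v, neg_abs_le v, le_abs_self u]
  have hr : ∀ a : ℤ, ∃ r, ∀ b, pr m l (a, b) ∈ θ ↔ b ≤ r := by
    intro a
    refine exists_end _ (fun x y h hx => hd a x a y le_rfl h hx) ?_ ?_
    · rw [← pr_shift m l a0 b0 (|a0| + |a|)] at hx
      exact ⟨_, hd _ _ _ _ (big _ _ _ hm') le_rfl hx⟩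
    · rw [← pr_shift m l a1 b1 (-(|a1| + |a|))] at hy
      exact ⟨_, fun h => hy (hd _ _ _ _ (by linarith [small m a1 a hm']) le_rfl h)⟩
  have hc : ∀ b : ℤ, ∃ c, ∀ a, pr m l (a, b) ∈ θ ↔ a ≤ c := by
    intro b
    refine exists_end _ (fun x y h hx => hd x b y b h le_rfl hx) ?_ ?_
    · rw [← pr_shift m l a0 b0 (-(|b0| + |b|))] at hx
      exact ⟨_, hd _ _ _ _ le_rfl (by linarith [big l b0 b hl']) hx⟩
    · rw [← pr_shift m l a1 b1 (|b1| + |b|)] at hy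
      exact ⟨_, fun h => hy (hd _ _ _ _ le_rfl (small _ _ _ hl') h)⟩
  choose r hr using hr
  choose c hc using hc
  exact ⟨r, c, ⟨hr, fun a b => hc b a⟩⟩

namespace IsBoundary

variable {m l : ℕ} {θ : Set (Cyl m l)} {r c : ℤ → ℤ}

lemma iff (H : IsBoundary m l θ r c) (a b : ℤ) : b ≤ r a ↔ a ≤ c b :=
  (H.row a b).symm.trans (H.col a b)

lemma row_anti (H : IsBoundary m l θ r c) {a a' : ℤ} (h : a ≤ a') : r a' ≤ r a :=
  (H.iff _ _).2 (h.trans ((H.iff _ _).1 le_rfl))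

lemma col_anti (H : IsBoundary m l θ r c) {b b' : ℤ} (h : b ≤ b') : c b' ≤ c b :=
  (H.iff _ _).1 (h.trans ((H.iff _ _).2 le_rfl))

lemma row_shift (H : IsBoundary m l θ r c) (a k : ℤ) : r (a + k * m) = r a - k * l := by
  have h : ∀ b, b - k * l ≤ r (a + k * m) ↔ b ≤ r a := fun b => by
    rw [← H.row, pr_shift, H.row]
  apply le_antisymm
  · linarith [(h (r (a + k * m) + k * l)).1 (by linarith)]
  · exact (h _).2 le_rfl

/-! ### The bottom set -/

lemma btm_iff (H : IsBoundary m l θ r c) (hm : 1 ≤ m) (hl : 1 ≤ l) (a b : ℤ) :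
    pr m l (a, b) ∈ btm m l θ ↔ b ≤ r a ∧ ¬ b + 1 ≤ r (a + 1) := by
  constructor
  · rintro ⟨i, h1, h2, h3⟩
    refine ⟨(H.row _ _).1 h1, fun h => ?_⟩
    have h4 := h3 _ ((H.row _ _).2 h) (by rw [← h2, con_pr, con_pr]; congr 1; ring)
    obtain ⟨p, q, hp, hq, e⟩ := (cle_pr_left ..).1 h4
    have := eq_of_pr_eq hm hl e.symm (by omega) (by omega)
    omega
  · rintro ⟨h1, h2⟩
    refine ⟨_, (H.row _ _).2 h1, rfl, fun y hy hc => ?_⟩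
    obtain ⟨p, q, rfl⟩ := pr_surj m l y
    rw [con_pr, con_pr, ZMod.intCast_eq_intCast_iff_dvd_sub] at hc
    obtain ⟨k, hk⟩ := hc
    -- shifting the lift `(p, q)` by `-k ω` puts it on the diagonal of `(a, b)`
    rw [← pr_shift m l p q (-k)] at hy ⊢
    have hy' := (H.row _ _).1 hy
    have hd : q - -k * l - (p + -k * m) = b - a := by push_cast at hk; linarith
    have hle : p + -k * m ≤ a := by
      by_contra hlt
      have := H.row_anti (a := a + 1) (a' := p + -k * m) (by omega)
      omega
    exact (cle_pr_left ..).2 ⟨_, _, hle, by linarith, rfl⟩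

lemma mem_max (H : IsBoundary m l θ r c) (hm : 1 ≤ m) (hl : 1 ≤ l) {a b : ℤ}
    (h0 : ¬ b + 1 ≤ r (a + 1)) (h1 : b ≤ r (a + 1)) (h2 : b + 1 ≤ r a) :
    pr m l (a, b) ∈ btmMax m l θ := by
  refine ⟨(H.btm_iff hm hl _ _).2 ⟨by omega, h0⟩, fun y hy hc => ?_⟩
  obtain ⟨p, q, hp, hq, rfl⟩ := (cle_pr_left ..).1 hc
  have hb := ((H.btm_iff hm hl _ _).1 hy).2
  have hpa : p = a := by
    by_contra hne
    have := H.row_anti (a := p + 1) (a' := a) (by omega)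
    omega
  have hqb : q = b := by
    subst hpa
    omega
  rw [hpa, hqb]

lemma of_mem_max (H : IsBoundary m l θ r c) (hm : 1 ≤ m) (hl : 1 ≤ l) {a b : ℤ}
    (h : pr m l (a, b) ∈ btmMax m l θ) :
    ¬ b + 1 ≤ r (a + 1) ∧ b ≤ r (a + 1) ∧ b + 1 ≤ r a := by
  obtain ⟨h0, hmax⟩ := h
  obtain ⟨h1, h2⟩ := (H.btm_iff hm hl _ _).1 h0
  refine ⟨h2, ?_, ?_⟩
  · by_contra hlt
    have h3 := hmax (pr m l (a, b - 1))
      ((H.btm_iff hm hl _ _).2 ⟨by omega, by omega⟩)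
      ((cle_pr_left ..).2 ⟨_, _, le_rfl, by omega, rfl⟩)
    have := eq_of_pr_eq hm hl h3.symm le_rfl (by omega)
    omega
  · by_contra hlt
    have h3 := hmax (pr m l (a - 1, b))
      ((H.btm_iff hm hl _ _).2 ⟨h1.trans (H.row_anti (by omega)), by
        rwa [sub_add_cancel]⟩)
      ((cle_pr_left ..).2 ⟨_, _, by omega, le_rfl, rfl⟩)
    have := eq_of_pr_eq hm hl h3.symm (by omega) le_rfl
    omega

lemma mem_min (H : IsBoundary m l θ r c) (hm : 1 ≤ m) (hl : 1 ≤ l) {a b : ℤ}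
    (h0 : b ≤ r a) (h1 : ¬ b ≤ r (a + 1)) (h2 : ¬ b + 1 ≤ r a) :
    pr m l (a, b) ∈ btmMin m l θ := by
  refine ⟨(H.btm_iff hm hl _ _).2 ⟨h0, by omega⟩, fun y hy hc => ?_⟩
  obtain ⟨p, q, hp, hq, rfl⟩ := (cle_pr_right ..).1 hc
  have hb := ((H.btm_iff hm hl _ _).1 hy).1
  have hpa : p = a := by
    by_contra hne
    have := H.row_anti (a := a + 1) (a' := p) (by omega)
    omega
  have hqb : q = b := by
    subst hpa
    omega
  rw [hpa, hqb]

/-- A bottom cell below another bottom cell witnesses that the latter is not minimal. -/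
lemma not_mem_min (H : IsBoundary m l θ r c) (hm : 1 ≤ m) (hl : 1 ≤ l) {a b p q : ℤ}
    (hp : a ≤ p) (hq : b ≤ q) (hne : a + b < p + q) (h1 : q ≤ r p) (h2 : ¬ q + 1 ≤ r (p + 1)) :
    pr m l (a, b) ∉ btmMin m l θ := by
  rintro ⟨-, hmin⟩
  have h3 := hmin (pr m l (p, q)) ((H.btm_iff hm hl _ _).2 ⟨h1, h2⟩)
    ((cle_pr_right ..).2 ⟨_, _, hp, hq, rfl⟩)
  have := eq_of_pr_eq hm hl h3 hp hq
  omega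

end IsBoundary

/-! ### Hooks as intervals of contents -/

/-- `α_{p+1} + ⋯ + α_q`, with indices read modulo `κ`. -/
noncomputable def intervalRoot (κ : ℕ) (p q : ℤ) : Hw κ := ∑ i ∈ Finset.Ioc p q, alphaR κ (i : ZMod κ)

lemma intervalRoot_add (κ : ℕ) {p q s : ℤ} (h1 : p ≤ q) (h2 : q ≤ s) :
    intervalRoot κ p q + intervalRoot κ q s = intervalRoot κ p s := by
  unfold intervalRoot
  rw [← Finset.Ioc_union_Ioc_eq_Ioc h1 h2, Finset.sum_union]
  exact Finset.disjoint_left.2 fun x hx hy => by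
    simp only [Finset.mem_Ioc] at hx hy; omega

lemma intervalRoot_single (κ : ℕ) (p q : ℤ) (h : q = p + 1) :
    intervalRoot κ p q = alphaR κ (q : ZMod κ) := by
  subst h
  have : Finset.Ioc p (p + 1) = {p + 1} := by
    ext x; simp only [Finset.mem_Ioc, Finset.mem_singleton]; omega
  simp [intervalRoot, this]

lemma alC_pr (m l : ℕ) (a b : ℤ) :
    alC m l (pr m l (a, b)) = intervalRoot (m + l) (b - a - 1) (b - a) := by
  rw [intervalRoot_single _ _ _ (by ring)]; rfl

namespace IsBoundary

variable {m l : ℕ} {θ : Set (Cyl m l)} {r c : ℤ → ℤ}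

lemma arm_sum (H : IsBoundary m l θ r c) (hm : 1 ≤ m) (hl : 1 ≤ l) (a b : ℤ) :
    ∑ᶠ y ∈ armSet m l θ (pr m l (a, b)), alC m l y
      = intervalRoot (m + l) (b - a) (r a - a) := by
  have hset : armSet m l θ (pr m l (a, b))
      = (fun i : ℤ => pr m l (a, i + a)) '' (Finset.Ioc (b - a) (r a - a) : Finset ℤ) := by
    ext y
    simp only [armSet, Set.mem_ofPred_eq, Set.mem_image, Finset.coe_Ioc, Set.mem_Ioc]
    constructor
    · rintro ⟨hy, k, hk, rfl⟩
      rw [← map_add, Prod.mk_add_mk, add_zero, H.row] at hy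
      refine ⟨b - a + k, ⟨by omega, by omega⟩, ?_⟩
      rw [← map_add, Prod.mk_add_mk, add_zero]
      congr 2; ring
    · rintro ⟨i, ⟨h1, h2⟩, rfl⟩
      refine ⟨(H.row _ _).2 (by omega), (i + a - b).toNat, by omega, ?_⟩
      rw [← map_add, Prod.mk_add_mk, add_zero]
      congr 2; omega
  have hinj : Function.Injective (fun i : ℤ => pr m l (a, i + a)) := by
    intro i j hij
    rcases le_total i j with h | h
    · have := eq_of_pr_eq hm hl hij.symm le_rfl (by omega); omega
    · have := eq_of_pr_eq hm hl hij le_rfl (by omega); omega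
  rw [hset, finsum_mem_image hinj.injOn, finsum_mem_coe_finset]
  refine Finset.sum_congr rfl fun i _ => ?_
  rw [alC, con_pr, add_sub_cancel_right]

lemma leg_sum (H : IsBoundary m l θ r c) (hm : 1 ≤ m) (hl : 1 ≤ l) (a b : ℤ) :
    ∑ᶠ y ∈ legSet m l θ (pr m l (a, b)), alC m l y
      = intervalRoot (m + l) (b - 1 - c b) (b - a - 1) := by
  have hset : legSet m l θ (pr m l (a, b))
      = (fun i : ℤ => pr m l (b - i, b)) ''
        (Finset.Ioc (b - 1 - c b) (b - a - 1) : Finset ℤ) := by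
    ext y
    simp only [legSet, Set.mem_ofPred_eq, Set.mem_image, Finset.coe_Ioc, Set.mem_Ioc]
    constructor
    · rintro ⟨hy, k, hk, rfl⟩
      rw [← map_add, Prod.mk_add_mk, add_zero, H.col] at hy
      refine ⟨b - a - k, ⟨by omega, by omega⟩, ?_⟩
      rw [← map_add, Prod.mk_add_mk, add_zero]
      congr 2; ring
    · rintro ⟨i, ⟨h1, h2⟩, rfl⟩
      refine ⟨(H.col _ _).2 (by omega), (b - i - a).toNat, by omega, ?_⟩
      rw [← map_add, Prod.mk_add_mk, add_zero]
      congr 2; omega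
  have hinj : Function.Injective (fun i : ℤ => pr m l (b - i, b)) := by
    intro i j hij
    rcases le_total i j with h | h
    · have := eq_of_pr_eq hm hl hij (by omega) le_rfl; omega
    · have := eq_of_pr_eq hm hl hij.symm (by omega) le_rfl; omega
  rw [hset, finsum_mem_image hinj.injOn, finsum_mem_coe_finset]
  refine Finset.sum_congr rfl fun i _ => ?_
  rw [alC, con_pr, sub_sub_cancel]

lemma arm_root (H : IsBoundary m l θ r c) (hm : 1 ≤ m) (hl : 1 ≤ l) {a b : ℤ} (h : b ≤ r a) :
    alC m l (pr m l (a, b)) + ∑ᶠ y ∈ armSet m l θ (pr m l (a, b)), alC m l y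
      = intervalRoot (m + l) (b - a - 1) (r a - a) := by
  rw [H.arm_sum hm hl, alC_pr, intervalRoot_add _ (by omega) (by omega)]

lemma leg_root (H : IsBoundary m l θ r c) (hm : 1 ≤ m) (hl : 1 ≤ l) {a b : ℤ} (h : b ≤ r a) :
    alC m l (pr m l (a, b)) + ∑ᶠ y ∈ legSet m l θ (pr m l (a, b)), alC m l y
      = intervalRoot (m + l) (b - 1 - c b) (b - a) := by
  have := (H.iff a b).1 h
  rw [H.leg_sum hm hl, alC_pr,
    add_comm (intervalRoot _ _ _), intervalRoot_add _ (by omega) (by omega)]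

/-- The hook at `(a, b)` runs over the contents from the foot of column `b` to the end of
row `a`. -/
lemma hk_pr (H : IsBoundary m l θ r c) (hm : 1 ≤ m) (hl : 1 ≤ l) {a b : ℤ} (h : b ≤ r a) :
    hk m l θ (pr m l (a, b)) = intervalRoot (m + l) (b - 1 - c b) (r a - a) := by
  have := (H.iff a b).1 h
  rw [hk, H.arm_root hm hl h, H.leg_sum hm hl, add_comm (intervalRoot _ _ _),
    intervalRoot_add _ (by omega) (by omega)]

/-! ### Elementary moves between hooks -/

/-- The interval between the ends of two consecutive rows is in `Π_θ`. -/
lemma row_gap (H : IsBoundary m l θ r c) (hm : 1 ≤ m) (hl : 1 ≤ l) (a : ℤ) :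
    intervalRoot (m + l) (r a - a) (r (a - 1) - (a - 1)) ∈ PiTheta m l θ := by
  have hle : r a ≤ r (a - 1) := H.row_anti (by omega)
  have ha : r (a - 1 + 1) = r a := by rw [sub_add_cancel]
  rcases eq_or_lt_of_le hle with h | h
  · refine Or.inl (Or.inl ⟨pr m l (a - 1, r a), ?_, ?_, ?_, ?_⟩)
    · exact (H.btm_iff hm hl _ _).2 ⟨hle, by omega⟩
    · intro hmax
      have := H.of_mem_max hm hl hmax
      omega
    · exact H.not_mem_min hm hl (p := a) (q := r a) (by omega) le_rfl (by omega) le_rfl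
        (by have := H.row_anti (a := a) (a' := a + 1) (by omega); omega)
    · rw [alC_pr, h]; congr 1; ring
  · refine Or.inl (Or.inr ⟨pr m l (a - 1, r a), ?_, ?_⟩)
    · exact H.mem_max hm hl (by omega) (by omega) (by omega)
    · rw [H.arm_root hm hl hle]; congr 1; ring

/-- The interval between the feet of two consecutive columns is in `Π_θ`. -/
lemma col_gap (H : IsBoundary m l θ r c) (hm : 1 ≤ m) (hl : 1 ≤ l) (b : ℤ) :
    intervalRoot (m + l) (b - 1 - 1 - c (b - 1)) (b - 1 - c b) ∈ PiTheta m l θ := by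
  have hle : c b ≤ c (b - 1) := H.col_anti (by omega)
  have h1 : b - 1 ≤ r (c b) := (H.iff _ _).2 hle
  have h2 : b ≤ r (c b) := (H.iff _ _).2 le_rfl
  have h3 : ¬ b ≤ r (c b + 1) := by rw [H.iff]; omega
  rcases eq_or_lt_of_le hle with h | h
  · refine Or.inl (Or.inl ⟨pr m l (c b, b - 1), ?_, ?_, ?_, ?_⟩)
    · exact (H.btm_iff hm hl _ _).2 ⟨h1, by omega⟩
    · intro hmax
      obtain ⟨-, h4, -⟩ := H.of_mem_max hm hl hmax
      rw [H.iff] at h4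
      omega
    · exact H.not_mem_min hm hl (p := c b) (q := b) le_rfl (by omega) (by omega) h2 (by omega)
    · rw [alC_pr, h]; congr 1; ring
  · refine Or.inr ⟨pr m l (c b, b - 1), ?_, ?_⟩
    · exact H.mem_max hm hl (by omega) ((H.iff _ _).2 (by omega)) (by omega)
    · rw [H.leg_root hm hl h1]

/-- The relation whose reflexive-transitive closure is compared with `⊴`. -/
abbrev Step (m l : ℕ) (θ : Set (Cyl m l)) (u v : Hw (m + l)) : Prop :=
  v ∈ RwTheta m l θ ∧ v - u ∈ PiTheta m l θ

lemma step_row (H : IsBoundary m l θ r c) (hm : 1 ≤ m) (hl : 1 ≤ l) {a b : ℤ} (h : b ≤ r a) :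
    Step m l θ (hk m l θ (pr m l (a, b))) (hk m l θ (pr m l (a - 1, b))) := by
  have hle : r a ≤ r (a - 1) := H.row_anti (by omega)
  have := (H.iff a b).1 h
  refine ⟨⟨_, (H.row _ _).2 (h.trans hle), rfl⟩, ?_⟩
  rw [H.hk_pr hm hl h, H.hk_pr hm hl (h.trans hle),
    ← intervalRoot_add _ (q := r a - a) (by omega) (by omega), add_sub_cancel_left]
  exact H.row_gap hm hl a

lemma step_col (H : IsBoundary m l θ r c) (hm : 1 ≤ m) (hl : 1 ≤ l) {a b : ℤ} (h : b ≤ r a) :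
    Step m l θ (hk m l θ (pr m l (a, b))) (hk m l θ (pr m l (a, b - 1))) := by
  have hle : c b ≤ c (b - 1) := H.col_anti (by omega)
  have := (H.iff a b).1 h
  have h' : b - 1 ≤ r a := by omega
  refine ⟨⟨_, (H.row _ _).2 h', rfl⟩, ?_⟩
  rw [H.hk_pr hm hl h, H.hk_pr hm hl h',
    ← intervalRoot_add _ (q := b - 1 - c b) (by omega) (by omega), add_sub_cancel_right]
  exact H.col_gap hm hl b

lemma chain (H : IsBoundary m l θ r c) (hm : 1 ≤ m) (hl : 1 ≤ l) {a b : ℤ} (h : b ≤ r a)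
    (i j : ℕ) :
    Relation.ReflTransGen (Step m l θ) (hk m l θ (pr m l (a, b)))
      (hk m l θ (pr m l (a - i, b - j))) := by
  have h1 : ∀ i : ℕ, b ≤ r (a - i) := fun i => h.trans (H.row_anti (by omega))
  induction j with
  | zero =>
    induction i with
    | zero => simpa using Relation.ReflTransGen.refl
    | succ i ih =>
      refine ih.tail ?_
      have := H.step_row hm hl (a := a - i) (b := b) (h1 i)
      convert this using 4 <;> push_cast <;> ring_nf
  | succ j ih =>
    refine ih.tail ?_
    have := H.step_col hm hl (a := a - i) (b := b - j) (by have := h1 i; omega)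
    convert this using 4
    push_cast; ring_nf

/-! ### A separating functional -/

/-- Row ends and column feet never have the same content index. -/
lemma row_ne_col (H : IsBoundary m l θ r c) (a b : ℤ) : r a - a ≠ b - 1 - c b := by
  have := H.iff a b
  omega

end IsBoundary

open Classical in
/-- The step function on content indices equal to `⌊(n - s) / κ⌋` on the row ends
`n = r a - a` and to `⌊(n - t) / κ⌋` elsewhere, in particular on the column feet. -/
noncomputable def stepFn (m l : ℕ) (r : ℤ → ℤ) (s t n : ℤ) : ℤ :=
  if ∃ a, n = r a - a then (n - s) / (m + l : ℕ) else (n - t) / (m + l : ℕ)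

/-- The functional on `h*` sending `α_n` to `F(n) - F(n - 1)` for the representatives
`0 ≤ n < κ`. -/
noncomputable def functional (κ : ℕ) [NeZero κ] (F : ℤ → ℤ) : Hw κ →+ ℚ where
  toFun x := ∑ i : ZMod κ, x.1 i * ((F i.val - F (i.val - 1) : ℤ) : ℚ)
  map_zero' := by simp
  map_add' x y := by simp [add_mul, Finset.sum_add_distrib]

lemma functional_interval (κ : ℕ) [NeZero κ] (F : ℤ → ℤ) (hF : ∀ n, F (n + κ) = F n + 1)
    {p q : ℤ} (h : p ≤ q) : functional κ F (intervalRoot κ p q) = ((F q - F p : ℤ) : ℚ) := by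
  have hper : Function.Periodic (fun n => F n - F (n - 1)) (κ : ℤ) := fun n => by
    have h1 := hF n
    have h2 := hF (n - 1)
    have h3 : n + κ - 1 = n - 1 + κ := by ring
    simp only [h3]
    omega
  have hα : ∀ n : ℤ, functional κ F (alphaR κ (n : ZMod κ)) = ((F n - F (n - 1) : ℤ) : ℚ) := by
    intro n
    have h1 : functional κ F (alphaR κ (n : ZMod κ))
        = ((F (n : ZMod κ).val - F ((n : ZMod κ).val - 1) : ℤ) : ℚ) := by
      simp [functional, alphaR, Pi.single_apply]
    rw [h1, ZMod.val_intCast]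
    have h2 := hper.sub_zsmul_eq (x := n) (n / κ)
    have h3 : n % (κ : ℤ) = n - (n / κ) • (κ : ℤ) := by
      rw [Int.emod_def, smul_eq_mul, mul_comm]
    rw [h3]
    exact congrArg _ h2
  obtain ⟨k, rfl⟩ : ∃ k : ℕ, q = p + k := ⟨(q - p).toNat, by omega⟩
  clear h
  induction k with
  | zero => simp [intervalRoot]
  | succ k ih =>
    rw [← intervalRoot_add κ (q := p + k) (by omega) (by push_cast; omega), map_add, ih,
      intervalRoot_single κ (p + k) _ (by push_cast; ring), hα]
    have : p + ((k + 1 : ℕ) : ℤ) - 1 = p + k := by push_cast; ring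
    rw [this]
    push_cast
    ring

namespace IsBoundary

variable {m l : ℕ} {θ : Set (Cyl m l)} {r c : ℤ → ℤ}

lemma stepFn_row (s t a : ℤ) :
    stepFn m l r s t (r a - a) = (r a - a - s) / (m + l : ℕ) := by
  rw [stepFn, if_pos ⟨a, rfl⟩]

lemma stepFn_col (H : IsBoundary m l θ r c) (s t b : ℤ) :
    stepFn m l r s t (b - 1 - c b) = (b - 1 - c b - t) / (m + l : ℕ) := by
  rw [stepFn, if_neg]
  rintro ⟨a, h⟩
  exact H.row_ne_col a b h.symm

lemma stepFn_shift (H : IsBoundary m l θ r c) (hm : 1 ≤ m) (s t n : ℤ) :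
    stepFn m l r s t (n + (m + l : ℕ)) = stepFn m l r s t n + 1 := by
  have hpos : ((m + l : ℕ) : ℤ) ≠ 0 := by omega
  have hiff : (∃ a, n + (m + l : ℕ) = r a - a) ↔ ∃ a, n = r a - a := by
    constructor
    · rintro ⟨a, h⟩
      refine ⟨a + 1 * m, ?_⟩
      rw [H.row_shift]; push_cast at h; linarith
    · rintro ⟨a, h⟩
      refine ⟨a + -1 * m, ?_⟩
      rw [H.row_shift]; push_cast; linarith
  have hdiv : ∀ u : ℤ, (n + (m + l : ℕ) - u) / (m + l : ℕ) = (n - u) / (m + l : ℕ) + 1 := by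
    intro u
    have : n + (m + l : ℕ) - u = n - u + 1 * (m + l : ℕ) := by ring
    rw [this, Int.add_mul_ediv_right _ _ hpos]
  by_cases h : ∃ a, n = r a - a
  · rw [stepFn, stepFn, if_pos (hiff.2 h), if_pos h, hdiv]
  · rw [stepFn, stepFn, if_neg (mt hiff.1 h), if_neg h, hdiv]

/-- Every element of `Π_θ` is an interval between two row ends or between two column feet, and
the step function is monotone on each of the two kinds of indices. -/
lemma functional_nonneg (H : IsBoundary m l θ r c) (hm : 1 ≤ m) (hl : 1 ≤ l)
    [NeZero (m + l)] (s t : ℤ) {v : Hw (m + l)} (hv : v ∈ PiTheta m l θ) :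
    0 ≤ functional (m + l) (stepFn m l r s t) v := by
  have hrow : ∀ p q a a' : ℤ, p = r a - a → q = r a' - a' → p ≤ q →
      0 ≤ functional (m + l) (stepFn m l r s t) (intervalRoot (m + l) p q) := by
    intro p q a a' hp hq h
    rw [functional_interval _ _ (H.stepFn_shift hm s t) h, hp, hq, stepFn_row, stepFn_row]
    have := Int.ediv_le_ediv (a := r a - a - s) (b := r a' - a' - s) (c := (m + l : ℕ))
      (by omega) (by omega)
    exact_mod_cast sub_nonneg.2 this
  have hcol : ∀ p q b b' : ℤ, p = b - 1 - c b → q = b' - 1 - c b' → p ≤ q →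
      0 ≤ functional (m + l) (stepFn m l r s t) (intervalRoot (m + l) p q) := by
    intro p q b b' hp hq h
    rw [functional_interval _ _ (H.stepFn_shift hm s t) h, hp, hq, H.stepFn_col, H.stepFn_col]
    have := Int.ediv_le_ediv (a := b - 1 - c b - t) (b := b' - 1 - c b' - t) (c := (m + l : ℕ))
      (by omega) (by omega)
    exact_mod_cast sub_nonneg.2 this
  rcases hv with (⟨x, hx, hmax, hmin, rfl⟩ | ⟨x, hx, rfl⟩) | ⟨x, hx, rfl⟩
  · obtain ⟨a, b, rfl⟩ := pr_surj m l x
    obtain ⟨h1, h2⟩ := (H.btm_iff hm hl _ _).1 hx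
    rw [alC_pr]
    have i1 := H.iff a b
    have i2 := H.iff (a + 1) b
    have i3 := H.iff a (b + 1)
    have i4 := H.iff (a + 1) (b + 1)
    by_cases h3 : b ≤ r (a + 1)
    · have h4 : ¬ b + 1 ≤ r a := fun h4 => hmax (H.mem_max hm hl h2 h3 h4)
      exact hrow _ _ (a + 1) a (by omega) (by omega) (by omega)
    · have h4 : b + 1 ≤ r a := by
        by_contra h4
        exact hmin (H.mem_min hm hl h1 h3 h4)
      exact hcol _ _ b (b + 1) (by omega) (by omega) (by omega)
  · obtain ⟨a, b, rfl⟩ := pr_surj m l x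
    obtain ⟨h1, h2, h3⟩ := H.of_mem_max hm hl hx
    rw [H.arm_root hm hl (by omega)]
    exact hrow _ _ (a + 1) a (by omega) rfl (by omega)
  · obtain ⟨a, b, rfl⟩ := pr_surj m l x
    obtain ⟨h1, h2, h3⟩ := H.of_mem_max hm hl hx
    rw [H.leg_root hm hl (by omega)]
    have i1 := H.iff a b
    have i3 := H.iff a (b + 1)
    have i4 := H.iff (a + 1) (b + 1)
    exact hcol _ _ b (b + 1) rfl (by omega) (by omega)

lemma functional_nonneg_closure (H : IsBoundary m l θ r c) (hm : 1 ≤ m) (hl : 1 ≤ l)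
    [NeZero (m + l)] (s t : ℤ) {v : Hw (m + l)}
    (hv : v ∈ AddSubmonoid.closure (PiTheta m l θ)) :
    0 ≤ functional (m + l) (stepFn m l r s t) v := by
  induction hv using AddSubmonoid.closure_induction with
  | mem x hx => exact H.functional_nonneg hm hl s t hx
  | zero => simp
  | add x y _ _ hx hy => rw [map_add]; exact add_nonneg hx hy

/-- Two hooks in the relation `⊴`, whose lifts are normalized so that the row of the larger lies
less than one period above the row of the smaller, also have their columns in order. -/
lemma col_le_of_trile (H : IsBoundary m l θ r c) (hm : 1 ≤ m) (hl : 1 ≤ l) {a b p q : ℤ}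
    (h1 : b ≤ r a) (h2 : q ≤ r p) (hp : p ≤ a) (hpm : a - m < p)
    (h : trile m l θ (hk m l θ (pr m l (a, b))) (hk m l θ (pr m l (p, q)))) : q ≤ b := by
  by_contra hlt
  have : NeZero (m + l) := ⟨by omega⟩
  -- the offsets make the functional vanish on the row part and be negative on the column part
  have hnn := H.functional_nonneg_closure hm hl (r a - a) (q - 1 - c q) h
  have i1 := (H.iff _ _).1 h1
  have i2 := (H.iff _ _).1 h2
  rw [map_sub, H.hk_pr hm hl h1, H.hk_pr hm hl h2,
    functional_interval _ _ (H.stepFn_shift hm _ _) (by omega),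
    functional_interval _ _ (H.stepFn_shift hm _ _) (by omega),
    stepFn_row, stepFn_row, H.stepFn_col, H.stepFn_col] at hnn
  have hr1 : r a ≤ r p := H.row_anti hp
  have hr2 : r p ≤ r (a + -1 * m) := H.row_anti (by omega)
  rw [H.row_shift] at hr2
  have hc : c q ≤ c b := H.col_anti (by omega)
  have e1 : (r p - p - (r a - a)) / ((m + l : ℕ) : ℤ) = 0 :=
    Int.ediv_eq_zero_of_lt (by omega) (by push_cast; omega)
  have e2 : (b - 1 - c b - (q - 1 - c q)) / ((m + l : ℕ) : ℤ) < 0 :=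
    Int.ediv_neg_of_neg_of_pos (by omega) (by omega)
  rw [e1, sub_self, sub_self, Int.zero_ediv] at hnn
  have : (0 : ℤ) ≤ 0 - 0 - (0 - (b - 1 - c b - (q - 1 - c q)) / ((m + l : ℕ) : ℤ)) := by
    exact_mod_cast hnn
  omega

end IsBoundary

/-- Proposition 3.10: for α ⊴ β in R(w_θ) there is a chain α = γ₁, …, γ_k = β in
R(w_θ) with consecutive differences in Π_θ; i.e. ⊴ is the reflexive-transitive
closure of the relation β - α ∈ Π_θ inside R(w_θ). -/
theorem statement_11 (m l : ℕ) (hm : 1 ≤ m) (hl : 1 ≤ l)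
    (θ : Set (Cyl m l)) (hθ : IsCylindric m l θ)
    (α β : Hw (m + l)) (hα : α ∈ RwTheta m l θ) (hβ : β ∈ RwTheta m l θ) :
    trile m l θ α β ↔
      Relation.ReflTransGen
        (fun u v => v ∈ RwTheta m l θ ∧ v - u ∈ PiTheta m l θ) α β := by
  constructor
  · intro h
    obtain ⟨r, c, H⟩ := exists_boundary hm hl hθ
    obtain ⟨x, hx, rfl⟩ := hα
    obtain ⟨y, hy, rfl⟩ := hβ
    obtain ⟨a, b, rfl⟩ := pr_surj m l x
    obtain ⟨p, q, rfl⟩ := pr_surj m l y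
    -- move the lift of the larger cell to within one period of row `a`
    rw [← pr_shift m l p q ((a - p) / m)] at hy h ⊢
    have hm' : (0 : ℤ) < m := by exact_mod_cast hm
    have e1 := Int.emod_add_mul_ediv (a - p) m
    have e2 := Int.emod_nonneg (a - p) hm'.ne'
    have e3 := Int.emod_lt_of_pos (a - p) hm'
    have hp : p + (a - p) / m * m ≤ a := by linarith
    have hpm : a - m < p + (a - p) / m * m := by linarith
    generalize p + (a - p) / m * m = p' at *
    generalize q - (a - p) / m * l = q' at *
    have h1 := (H.row _ _).1 hx
    have hq := H.col_le_of_trile hm hl h1 ((H.row _ _).1 hy) hp hpm h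
    obtain ⟨i, rfl⟩ : ∃ i : ℕ, p' = a - i := ⟨(a - p').toNat, by omega⟩
    obtain ⟨j, rfl⟩ : ∃ j : ℕ, q' = b - j := ⟨(b - q').toNat, by omega⟩
    exact H.chain hm hl h1 i j
  · intro h
    unfold trile
    clear hβ
    induction h with
    | refl => rw [sub_self]; exact zero_mem _
    | tail _ h ih =>
      have := add_mem (AddSubmonoid.subset_closure h.2) ih
      rwa [sub_add_sub_cancel] at this

end CylPaper
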